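/- Let (Ω, 𝓕, 𝔽 = (𝓕_t)_{t≥0}, P) be a filtered probability space satisfying the usual conditions. Let λ be a nonnegative 𝔽-progressively measurable process and Λ_t := ∫_0^t λ_s ds. Assume Λ_t < ∞ for all t ≥ 0 and Λ_∞ := lim_{t→∞} Λ_t = ∞, P-a.s. Let E be a random variable on Ω with the Exp(1) distribution, independent of 𝓕_∞. Define τ := inf{t > 0 : Λ_t ≥ E}, let 𝔸 = (𝓐_t)_{t≥0} with 𝓐_t := σ({τ ≤ s} : s ≤ t), and let 𝔾 be the right-continuous regularization of (𝓕_t ∨ 𝓐_t)_{t≥0}. Then: (a) the process (1_{{τ ≤ t}} − Λ_{τ∧t})_{t≥0} is a 𝔾-martingale, and (b) 𝔽 is immersed in 𝔾, i.e. every 𝔽-martingale with right-continuous sample paths is a 𝔾-martingale. -/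

import Mathlib

/-!
Write `N(x, a) = 1_{x ≤ a} - x ∧ a`. For an `Exp(1)` variable `E` one has `E[N(E, a)] = 0` for every
`a ≥ 0`. The clock `Λ` reaches the level `E` exactly at `τ`, so almost surely `τ ≤ t ↔ E ≤ Λ_t` and
`Λ_{τ ∧ t} = E ∧ Λ_t`: the compensated jump process is `N(E, Λ_t)`. As `E` is independent of `𝓕_∞`,
integrating it out first gives `∫_C N(E, Λ_t) dP = 0` for all `C ∈ 𝓕_∞`. An event `B` of
`𝓕_s ∨ 𝓐_s` agrees on `{s < τ}` with some `C ∈ 𝓕_s`, while the increment of the process over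
`[s, t]` vanishes on `{τ ≤ s}`; integrating the increment over `B` or over `C` is therefore the
same, which is the martingale property.

For immersion, `𝓕_s ∨ 𝓐_s` is, up to null sets, contained in `𝓕_s ∨ σ(E)`, and adjoining the
independent `σ(E)` does not change the conditional expectation of an `𝓕_∞`-measurable variable.

Right-continuity of the paths and uniform integrability of conditional expectations carry both
martingale properties over to the right-continuous regularization.
-/

open MeasureTheory ProbabilityTheory Filter Set
open scoped ENNReal Topology

noncomputable section

namespace InvMarkovJump

variable {Ω : Type*}

/-- `F` is a filtration (for times `t ≥ 0`) of sub-σ-algebras of `m0`. -/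
def IsFiltration (m0 : MeasurableSpace Ω) (F : ℝ → MeasurableSpace Ω) : Prop :=
  (∀ s t : ℝ, 0 ≤ s → s ≤ t → F s ≤ F t) ∧ ∀ t : ℝ, F t ≤ m0

/-- The right-continuous regularization `(⋂_{s > t} F s)_{t ≥ 0}` of a filtration. -/
def rcReg (F : ℝ → MeasurableSpace Ω) : ℝ → MeasurableSpace Ω :=
  fun t => ⨅ s ∈ Set.Ioi t, F s

/-- All sample paths of `M` are right-continuous (at every time `t ≥ 0`). -/
def RCPaths (M : ℝ → Ω → ℝ) : Prop :=
  ∀ ω, ∀ t : ℝ, 0 ≤ t → ContinuousWithinAt (fun s => M s ω) (Set.Ici t) t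

/-- `M` is a martingale (for times `t ≥ 0`) with respect to the filtration `F`
under the measure `μ`: it is adapted, integrable, and `E[M_t | F_s] = M_s` a.s.
for all `0 ≤ s ≤ t`. -/
def IsMartingale {m0 : MeasurableSpace Ω} (μ : Measure Ω)
    (F : ℝ → MeasurableSpace Ω) (M : ℝ → Ω → ℝ) : Prop :=
  (∀ t : ℝ, 0 ≤ t → Integrable (M t) μ) ∧
  (∀ t : ℝ, 0 ≤ t → Measurable[F t] (M t)) ∧
  ∀ s t : ℝ, 0 ≤ s → s ≤ t → μ[M t|F s] =ᵐ[μ] M s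

/-- `F` is immersed in `G`: `F ⊆ G` and every `F`-martingale (with right-continuous
sample paths) is a `G`-martingale. -/
def Immersed {m0 : MeasurableSpace Ω} (μ : Measure Ω)
    (F G : ℝ → MeasurableSpace Ω) : Prop :=
  (∀ t : ℝ, 0 ≤ t → F t ≤ G t) ∧
  ∀ M : ℝ → Ω → ℝ, RCPaths M → IsMartingale μ F M → IsMartingale μ G M

/-- The usual conditions: the filtration is right-continuous and `F 0` contains
all `μ`-null sets. -/
def UsualConditions {m0 : MeasurableSpace Ω} (μ : Measure Ω)
    (F : ℝ → MeasurableSpace Ω) : Prop :=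
  IsFiltration m0 F ∧ (∀ t : ℝ, 0 ≤ t → F t = rcReg F t) ∧
    ∀ s : Set Ω, μ s = 0 → MeasurableSet[F 0] s

/-- `E` is `Exp(1)`-distributed: `P(E > x) = e^{-x}` for all `x ≥ 0`. -/
def IsExpOne {m0 : MeasurableSpace Ω} (μ : Measure Ω) (E : Ω → ℝ) : Prop :=
  Measurable E ∧ ∀ x : ℝ, 0 ≤ x → μ {ω | x < E ω} = ENNReal.ofReal (Real.exp (-x))

/-- `F_∞ = ⋁_{t ≥ 0} F t`. -/
def Finfty (F : ℝ → MeasurableSpace Ω) : MeasurableSpace Ω :=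
  ⨆ t ∈ Set.Ici (0:ℝ), F t

/-- The natural filtration `(σ(Y_s : 0 ≤ s ≤ t))_{t ≥ 0}` of a process `Y`. -/
def natFilt {β : Type*} [MeasurableSpace β] (Y : ℝ → Ω → β) : ℝ → MeasurableSpace Ω :=
  fun t => ⨆ s ∈ Set.Icc (0:ℝ) t, MeasurableSpace.comap (Y s) inferInstance

/-- Progressive measurability of a process `u` with respect to the filtration `F`:
for every `t ≥ 0`, `(s, ω) ↦ u s ω` on `[0, t] × Ω` is `B([0,t]) ⊗ F t`-measurable. -/
def ProgMeas (F : ℝ → MeasurableSpace Ω) (u : ℝ → Ω → ℝ) : Prop :=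
  ∀ t : ℝ, 0 ≤ t →
    Measurable[MeasurableSpace.prod inferInstance (F t)]
      (fun p : Set.Icc (0:ℝ) t × Ω => u p.1 p.2)

lemma setIntegral_eq_of_inter_eq {V : Type*} [NormedAddCommGroup V] [NormedSpace ℝ V]
    {m0 : MeasurableSpace Ω} {μ : Measure Ω} {f : Ω → V} {T B C : Set Ω} (hB : MeasurableSet B)
    (hC : MeasurableSet C) (hBC : T ∩ B = T ∩ C) (hf : ∀ ω ∉ T, f ω = 0) :
    ∫ ω in B, f ω ∂μ = ∫ ω in C, f ω ∂μ := by
  have hinter : ∀ D, MeasurableSet D → ∫ ω in D, f ω ∂μ = ∫ ω in T ∩ D, f ω ∂μ := fun D hD =>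
    setIntegral_eq_of_subset_of_forall_sdiff_eq_zero hD inter_subset_right fun ω hω =>
      hf ω fun hT => hω.2 ⟨hT, hω.1⟩
  rw [hinter B hB, hinter C hC, hBC]

section CondExp

variable {V : Type*} [NormedAddCommGroup V] [NormedSpace ℝ V] [CompleteSpace V]
  {m m' n : MeasurableSpace Ω} {m0 : MeasurableSpace Ω} {μ : Measure Ω} {f g : Ω → V}

lemma ae_eq_condExp_of_isPiSystem (hm : m ≤ m0) [SigmaFinite (μ.trim hm)] {S : Set (Set Ω)}
    (hgen : m = MeasurableSpace.generateFrom S) (hpi : IsPiSystem S)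
    (hf : Integrable f μ) (hg : Integrable g μ) (hgm : StronglyMeasurable[m] g)
    (huniv : ∫ ω, g ω ∂μ = ∫ ω, f ω ∂μ) (hS : ∀ s ∈ S, ∫ ω in s, g ω ∂μ = ∫ ω in s, f ω ∂μ) :
    g =ᵐ[μ] μ[f | m] := by
  suffices h : ∀ B, MeasurableSet[m] B → ∫ ω in B, g ω ∂μ = ∫ ω in B, f ω ∂μ from
    ae_eq_condExp_of_forall_setIntegral_eq hm hf (fun _ _ _ => hg.integrableOn)
      (fun B hB _ => h B hB) hgm.aestronglyMeasurable
  intro B hB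
  induction B, hB using MeasurableSpace.induction_on_inter hgen hpi with
  | empty => simp
  | basic t ht => exact hS t ht
  | compl t ht ih =>
    rw [setIntegral_compl (hm _ ht) hg, setIntegral_compl (hm _ ht) hf, huniv, ih]
  | iUnion s hd hs ih =>
    rw [integral_iUnion (fun i => hm _ (hs i)) hd hg.integrableOn,
      integral_iUnion (fun i => hm _ (hs i)) hd hf.integrableOn]
    exact tsum_congr ih

lemma sup_eq_generateFrom_image2_inter (m m' : MeasurableSpace Ω) :
    m ⊔ m' = MeasurableSpace.generateFrom
      (image2 (· ∩ ·) {A | MeasurableSet[m] A} {D | MeasurableSet[m'] D}) := by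
  refine le_antisymm (sup_le (fun A hA => ?_) fun D hD => ?_)
    (MeasurableSpace.generateFrom_le ?_)
  · exact MeasurableSpace.measurableSet_generateFrom ⟨A, hA, univ, .univ, inter_univ A⟩
  · exact MeasurableSpace.measurableSet_generateFrom ⟨univ, .univ, D, hD, univ_inter D⟩
  · rintro _ ⟨A, hA, D, hD, rfl⟩
    exact MeasurableSet.inter ((le_sup_left : m ≤ m ⊔ m') A hA) ((le_sup_right : m' ≤ m ⊔ m') D hD)

lemma isPiSystem_image2_inter {S T : Set (Set Ω)} (hS : IsPiSystem S) (hT : IsPiSystem T) :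
    IsPiSystem (image2 (· ∩ ·) S T) := by
  rintro _ ⟨A, hA, D, hD, rfl⟩ _ ⟨A', hA', D', hD', rfl⟩ hne
  rw [inter_inter_inter_comm] at hne ⊢
  exact ⟨_, hS A hA A' hA' hne.left, _, hT D hD D' hD' hne.right, rfl⟩

lemma setIntegral_inter_of_indep (hm : m ≤ m0) (hm' : m' ≤ m0) [SigmaFinite (μ.trim hm')]
    (hind : Indep m m' μ) (hf : Integrable f μ) (hfm : StronglyMeasurable[m] f) {A D : Set Ω}
    (hA : MeasurableSet[m] A) (hD : MeasurableSet[m'] D) :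
    ∫ ω in A ∩ D, f ω ∂μ = μ.real D • ∫ ω in A, f ω ∂μ := by
  have hfA : Integrable (A.indicator f) μ := hf.indicator (hm A hA)
  calc ∫ ω in A ∩ D, f ω ∂μ
      = ∫ ω in D, A.indicator f ω ∂μ := by rw [setIntegral_indicator (hm A hA), inter_comm]
    _ = ∫ ω in D, (μ[A.indicator f | m']) ω ∂μ := (setIntegral_condExp hm' hfA hD).symm
    _ = ∫ _ in D, (∫ ω', A.indicator f ω' ∂μ) ∂μ :=
        integral_congr_ae (ae_restrict_of_ae
          (condExp_indep_eq hm hm' (hfm.indicator hA) hind))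
    _ = μ.real D • ∫ ω in A, f ω ∂μ := by rw [setIntegral_const, integral_indicator (hm A hA)]

lemma condExp_sup_of_indep [IsFiniteMeasure μ] (hnm : n ≤ m) (hm : m ≤ m0) (hm' : m' ≤ m0)
    (hind : Indep m m' μ) (hf : Integrable f μ) (hfm : StronglyMeasurable[m] f) :
    μ[f | n ⊔ m'] =ᵐ[μ] μ[f | n] := by
  have hn : n ≤ m0 := hnm.trans hm
  refine (ae_eq_condExp_of_isPiSystem (sup_le hn hm') (sup_eq_generateFrom_image2_inter n m')
    (isPiSystem_image2_inter (@MeasurableSpace.isPiSystem_measurableSet _ n)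
      (@MeasurableSpace.isPiSystem_measurableSet _ m')) hf
    integrable_condExp (stronglyMeasurable_condExp.mono le_sup_left) (integral_condExp hn) ?_).symm
  rintro _ ⟨A, hA, D, hD, rfl⟩
  rw [setIntegral_inter_of_indep hm hm' hind integrable_condExp
      (stronglyMeasurable_condExp.mono hnm) (hnm A hA) hD,
    setIntegral_inter_of_indep hm hm' hind hf hfm (hnm A hA) hD, setIntegral_condExp hn hf hA]

lemma condDistrib_ae_eq_const_of_indepFun [IsFiniteMeasure μ] {β γ : Type*} [MeasurableSpace β]
    [StandardBorelSpace β] [Nonempty β] {mγ : MeasurableSpace γ} {X : Ω → β} {Z : Ω → γ}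
    (hX : AEMeasurable X μ) (hZ : AEMeasurable Z μ) (hind : IndepFun Z X μ) :
    condDistrib X Z μ =ᵐ[μ.map Z] Kernel.const γ (μ.map X) :=
  condDistrib_ae_eq_of_measure_eq_compProd Z hX <| by
    rw [Measure.compProd_const, (indepFun_iff_map_prod_eq_prod_map_map hZ hX).1 hind]

lemma condExp_ae_eq_integral_map_of_indepFun [IsFiniteMeasure μ] {β γ : Type*} [MeasurableSpace β]
    [StandardBorelSpace β] [Nonempty β] {mγ : MeasurableSpace γ} {X : Ω → β} {Z : Ω → γ}
    {φ : γ → β → V} (hX : AEMeasurable X μ) (hZ : Measurable Z) (hind : IndepFun Z X μ)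
    (hφ : StronglyMeasurable (Function.uncurry φ))
    (hint : Integrable (fun ω => φ (Z ω) (X ω)) μ) :
    μ[fun ω => φ (Z ω) (X ω) | mγ.comap Z] =ᵐ[μ] fun ω => ∫ x, φ (Z ω) x ∂(μ.map X) := by
  refine (condExp_prod_ae_eq_integral_condDistrib hZ hX hφ hint).trans ?_
  filter_upwards [ae_of_ae_map hZ.aemeasurable
    (condDistrib_ae_eq_const_of_indepFun hX hZ.aemeasurable hind)] with ω hω
  simp only [hω, Kernel.const_apply, Function.uncurry]

lemma condExp_ae_eq_of_le_eventuallyMeasurableSpace [IsFiniteMeasure μ] (hm : m ≤ m0)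
    (hm' : m' ≤ m0) (hle : m ≤ eventuallyMeasurableSpace m' (ae μ)) (hf : Integrable f μ)
    (hgm : StronglyMeasurable[m] g) (hg : μ[f | m'] =ᵐ[μ] g) : μ[f | m] =ᵐ[μ] g := by
  refine (ae_eq_condExp_of_forall_setIntegral_eq hm hf
    (fun _ _ _ => (integrable_condExp.congr hg).integrableOn) (fun B hB _ => ?_)
    hgm.aestronglyMeasurable).symm
  obtain ⟨C, hC, hBC⟩ := hle B hB
  calc ∫ ω in B, g ω ∂μ
      = ∫ ω in C, (μ[f | m']) ω ∂μ := by
        rw [setIntegral_congr_set hBC, integral_congr_ae (ae_restrict_of_ae hg)]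
    _ = ∫ ω in B, f ω ∂μ := by rw [setIntegral_condExp hm' hf hC, setIntegral_congr_set hBC]

-- The conditional expectations of one integrable function are uniformly integrable, so almost
-- everywhere convergence upgrades to convergence in `L¹`.
lemma condExp_ae_eq_of_tendsto [IsFiniteMeasure μ] {f g : Ω → ℝ} {𝓗 : ℕ → MeasurableSpace Ω}
    {Z : ℕ → Ω → ℝ} (h𝓗 : ∀ k, 𝓗 k ≤ m0) (hm : ∀ k, m ≤ 𝓗 k) (hf : Integrable f μ)
    (hg : Integrable g μ) (hgm : StronglyMeasurable[m] g) (hZ : ∀ k, μ[f | 𝓗 k] =ᵐ[μ] Z k)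
    (hlim : ∀ᵐ ω ∂μ, Tendsto (fun k => Z k ω) atTop (𝓝 (g ω))) : μ[f | m] =ᵐ[μ] g := by
  have hcond : ∀ᵐ ω ∂μ, Tendsto (fun k => (μ[f | 𝓗 k]) ω) atTop (𝓝 (g ω)) := by
    filter_upwards [ae_all_iff.2 hZ, hlim] with ω hω hlimω
    simpa only [hω] using hlimω
  have hL1 : Tendsto (fun k => eLpNorm (μ[f | 𝓗 k] - g) 1 μ) atTop (𝓝 0) :=
    tendsto_Lp_finite_of_tendsto_ae le_rfl ENNReal.one_ne_top
      (fun _ => integrable_condExp.aestronglyMeasurable) (memLp_one_iff_integrable.2 hg)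
      (hf.uniformIntegrable_condExp h𝓗).2.1 hcond
  refine (ae_eq_condExp_of_forall_setIntegral_eq ((hm 0).trans (h𝓗 0)) hf
    (fun _ _ _ => hg.integrableOn) (fun B hB _ => ?_) hgm.aestronglyMeasurable).symm
  have hconv := tendsto_setIntegral_of_L1' g hg.aestronglyMeasurable
    (Eventually.of_forall fun _ => integrable_condExp) hL1 B
  simp only [fun k => setIntegral_condExp (h𝓗 k) hf (hm k B hB)] at hconv
  exact tendsto_nhds_unique hconv tendsto_const_nhds

end CondExp

section CompensatedJump

/-- The compensated single-jump path `t ↦ 1_{τ ≤ t} - L (τ ∧ t)`: the jump happens at time `τ` and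
`L` is its cumulative intensity. For `L = id` this is the path attached to a unit-rate clock. -/
def compensatedJump (L : ℝ → ℝ) (τ t : ℝ) : ℝ :=
  (if τ ≤ t then 1 else 0) - L (min τ t)

variable {L : ℝ → ℝ} {τ s t x a : ℝ}

lemma compensatedJump_of_le (h : τ ≤ t) : compensatedJump L τ t = 1 - L τ := by
  rw [compensatedJump, if_pos h, min_eq_left h]

lemma abs_compensatedJump_id_le (ha : 0 ≤ a) : |compensatedJump id x a| ≤ 1 + |x| := by
  have hind : |if x ≤ a then (1 : ℝ) else 0| ≤ 1 := by split_ifs <;> simp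
  have hmin : |min x a| ≤ |x| := by
    rcases le_total x a with h | h
    · rw [min_eq_left h]
    · rw [min_eq_right h]
      exact abs_le_abs_of_nonneg ha h
  exact (abs_sub _ _).trans (add_le_add hind hmin)

lemma measurable_compensatedJump_id :
    Measurable fun p : ℝ × ℝ => compensatedJump id p.2 p.1 :=
  (Measurable.ite (measurableSet_le measurable_snd measurable_fst) measurable_const
    measurable_const).sub (measurable_snd.min measurable_fst)

lemma continuousWithinAt_compensatedJump (hL : Continuous L) :
    ContinuousWithinAt (compensatedJump L τ) (Ici s) s := by
  refine ContinuousWithinAt.sub ?_ (by fun_prop)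
  rcases le_or_gt τ s with h | h
  · exact continuousWithinAt_const.congr (fun u hu => if_pos (h.trans hu)) (if_pos h)
  · refine (continuousAt_const (y := (0 : ℝ))).congr ?_ |>.continuousWithinAt
    filter_upwards [Iio_mem_nhds h] with u hu
    exact (if_neg (not_le.2 hu)).symm

end CompensatedJump

section Primitive

variable {l : ℝ → ℝ} {a : ℝ}

lemma monotone_setIntegral_Ioc (hl : ∀ s, 0 ≤ l s) (hint : ∀ t, IntegrableOn l (Ioc a t)) :
    Monotone fun t => ∫ s in Ioc a t, l s :=
  fun _ t hst => setIntegral_mono_set (hint t) (ae_of_all _ hl)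
    (Ioc_subset_Ioc_right hst).eventuallyLE

lemma continuous_setIntegral_Ioc (hint : ∀ t, IntegrableOn l (Ioc a t)) :
    Continuous fun t => ∫ s in Ioc a t, l s := by
  have hloc : ∀ b c, IntervalIntegrable ((Ioi a).indicator l) volume b c := fun b c => by
    rw [intervalIntegrable_iff, integrableOn_indicator_iff measurableSet_Ioi]
    exact (hint (max b c)).mono_set fun x hx => ⟨hx.1, hx.2.2⟩
  convert intervalIntegral.continuous_primitive hloc a using 2 with t
  rcases le_total a t with h | h
  · rw [intervalIntegral.integral_of_le h, setIntegral_indicator measurableSet_Ioi,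
      inter_eq_left.2 Ioc_subset_Ioi_self]
  · rw [intervalIntegral.integral_of_ge h, setIntegral_indicator measurableSet_Ioi,
      Ioc_inter_Ioi, sup_of_le_right h, Ioc_self, Ioc_eq_empty (not_lt.2 h), setIntegral_empty,
      neg_zero]

end Primitive

section Exponential

variable {m0 : MeasurableSpace Ω} {μ : Measure Ω} {E : Ω → ℝ}

lemma IsExpOne.measureReal_gt (hE : IsExpOne μ E) {x : ℝ} (hx : 0 ≤ x) :
    μ.real {ω | x < E ω} = Real.exp (-x) := by
  rw [measureReal_def, hE.2 x hx, ENNReal.toReal_ofReal (Real.exp_pos _).le]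

lemma IsExpOne.ae_pos [IsProbabilityMeasure μ] (hE : IsExpOne μ E) : ∀ᵐ ω ∂μ, 0 < E ω :=
  (mem_ae_iff_prob_eq_one (measurableSet_lt measurable_const hE.1)).2 <| by
    simpa using hE.2 0 le_rfl

lemma IsExpOne.integrable [IsProbabilityMeasure μ] (hE : IsExpOne μ E) : Integrable E μ := by
  have hnonneg : 0 ≤ᵐ[μ] E := hE.ae_pos.mono fun _ h => h.le
  rw [← lintegral_ofReal_ne_top_iff_integrable hE.1.aestronglyMeasurable hnonneg,
    lintegral_eq_lintegral_meas_lt μ hnonneg hE.1.aemeasurable,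
    setLIntegral_congr_fun measurableSet_Ioi fun x hx => hE.2 x (le_of_lt hx)]
  exact (integrableOn_exp_neg_Ioi 0).lintegral_lt_top.ne

lemma IsExpOne.measureReal_le [IsProbabilityMeasure μ] (hE : IsExpOne μ E) {a : ℝ} (ha : 0 ≤ a) :
    μ.real {ω | E ω ≤ a} = 1 - Real.exp (-a) := by
  rw [← hE.measureReal_gt ha, ← probReal_compl_eq_one_sub (measurableSet_lt measurable_const hE.1)]
  congr 1
  ext ω
  simp

lemma IsExpOne.integral_min [IsProbabilityMeasure μ] (hE : IsExpOne μ E) {a : ℝ} (ha : 0 ≤ a) :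
    ∫ ω, min (E ω) a ∂μ = 1 - Real.exp (-a) := by
  have htail : ∀ x ∈ Ioi (0 : ℝ), μ.real {ω | x < min (E ω) a} =
      (Iio a).indicator (fun x => Real.exp (-x)) x := fun x hx => by
    rcases lt_or_ge x a with h | h
    · simp [h, hE.measureReal_gt (le_of_lt hx)]
    · simp [not_lt.2 h]
  have hnonneg : 0 ≤ᵐ[μ] fun ω => min (E ω) a := hE.ae_pos.mono fun _ h => le_min h.le ha
  calc ∫ ω, min (E ω) a ∂μ
      = ∫ x in Ioi 0, μ.real {ω | x < min (E ω) a} :=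
        (hE.integrable.inf (integrable_const a)).integral_eq_integral_meas_lt hnonneg
    _ = ∫ x in Ioo 0 a, Real.exp (-x) := by
        rw [setIntegral_congr_fun measurableSet_Ioi htail, setIntegral_indicator measurableSet_Iio,
          Ioi_inter_Iio]
    _ = ∫ x in 0..a, Real.exp (-x) := by
        rw [intervalIntegral.integral_of_le ha, integral_Ioc_eq_integral_Ioo]
    _ = 1 - Real.exp (-a) := by
        rw [intervalIntegral.integral_comp_neg Real.exp, integral_exp, neg_zero, Real.exp_zero]

lemma IsExpOne.integrable_compensatedJump [IsProbabilityMeasure μ] (hE : IsExpOne μ E) {a : Ω → ℝ}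
    (ha : Measurable a) (ha0 : 0 ≤ᵐ[μ] a) :
    Integrable (fun ω => compensatedJump id (E ω) (a ω)) μ :=
  ((integrable_const 1).add hE.integrable.abs).mono'
    (measurable_compensatedJump_id.comp (ha.prodMk hE.1)).aestronglyMeasurable
    (ha0.mono fun _ h => abs_compensatedJump_id_le h)

lemma IsExpOne.integral_compensatedJump [IsProbabilityMeasure μ] (hE : IsExpOne μ E) {a : ℝ}
    (ha : 0 ≤ a) : ∫ ω, compensatedJump id (E ω) a ∂μ = 0 := by
  have hmeas : MeasurableSet {ω | E ω ≤ a} := measurableSet_le hE.1 measurable_const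
  have hjump_int : Integrable ({ω | E ω ≤ a}.indicator (1 : Ω → ℝ)) μ :=
    (integrable_const 1).indicator hmeas
  have hmin_int : Integrable (fun ω => min (E ω) a) μ := hE.integrable.inf (integrable_const a)
  calc ∫ ω, compensatedJump id (E ω) a ∂μ
      = ∫ ω, {ω | E ω ≤ a}.indicator (1 : Ω → ℝ) ω ∂μ - ∫ ω, min (E ω) a ∂μ :=
        integral_sub hjump_int hmin_int
    _ = 0 := by
        rw [integral_indicator_one hmeas, hE.measureReal_le ha, hE.integral_min ha, sub_self]

lemma IsExpOne.condExp_compensatedJump [IsProbabilityMeasure μ] {m : MeasurableSpace Ω}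
    (hE : IsExpOne μ E) (hm : m ≤ m0) (hind : Indep (MeasurableSpace.comap E inferInstance) m μ)
    {a : Ω → ℝ} (ha : Measurable[m] a) (ha0 : 0 ≤ᵐ[μ] a) :
    μ[fun ω => compensatedJump id (E ω) (a ω) | m] =ᵐ[μ] 0 := by
  have hid : @Measurable Ω Ω m0 m id := measurable_id'' hm
  have hindep : @IndepFun Ω Ω ℝ m0 m _ id E μ := by
    rw [IndepFun_iff_Indep, MeasurableSpace.comap_id]
    exact hind.symm
  have hφ : StronglyMeasurable[MeasurableSpace.prod m inferInstance]
      (Function.uncurry fun ω x => compensatedJump id x (a ω)) :=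
    (measurable_compensatedJump_id.comp
      ((ha.comp measurable_fst).prodMk measurable_snd)).stronglyMeasurable
  have hfreeze := condExp_ae_eq_integral_map_of_indepFun (mγ := m) (Z := id) hE.1.aemeasurable hid
    hindep hφ (hE.integrable_compensatedJump (ha.mono hm le_rfl) ha0)
  simp only [MeasurableSpace.comap_id, id_eq] at hfreeze
  filter_upwards [hfreeze, ha0] with ω hω hω0
  have hmeas : Measurable fun x => compensatedJump id x (a ω) :=
    measurable_compensatedJump_id.comp measurable_prodMk_left
  rw [hω, integral_map hE.1.aemeasurable hmeas.aestronglyMeasurable]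
  exact hE.integral_compensatedJump hω0

end Exponential

section Filtrations

variable {m0 : MeasurableSpace Ω} {μ : Measure Ω} {F H : ℝ → MeasurableSpace Ω}
  {M : ℝ → Ω → ℝ} {s t : ℝ}

lemma le_Finfty (ht : 0 ≤ t) : F t ≤ Finfty F :=
  le_iSup₂ (f := fun (t : ℝ) (_ : t ∈ Ici (0 : ℝ)) => F t) t ht

lemma Finfty_le (hF : IsFiltration m0 F) : Finfty F ≤ m0 :=
  iSup₂_le fun t _ => hF.2 t

lemma rcReg_le (hst : s < t) : rcReg F s ≤ F t :=
  iInf₂_le t hst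

lemma le_rcReg (hF : IsFiltration m0 F) (ht : 0 ≤ t) : F t ≤ rcReg F t :=
  le_iInf₂ fun u hu => hF.1 t u ht (le_of_lt hu)

lemma IsMartingale.rcReg_of_rightContinuous [IsFiniteMeasure μ] (hH : IsFiltration m0 H)
    (hM : IsMartingale μ H M)
    (hrc : ∀ᵐ ω ∂μ, ∀ t, 0 ≤ t → ContinuousWithinAt (fun s => M s ω) (Ici t) t) :
    IsMartingale μ (rcReg H) M := by
  obtain ⟨hint, hadapted, hcond⟩ := hM
  have hmeas : ∀ t, 0 ≤ t → Measurable[rcReg H t] (M t) := fun t ht =>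
    (hadapted t ht).mono (le_rcReg hH ht) le_rfl
  refine ⟨hint, hmeas, fun s t hs hst => ?_⟩
  rcases hst.eq_or_lt with rfl | hlt
  · exact (condExp_of_stronglyMeasurable ((rcReg_le (lt_add_one s)).trans (hH.2 _))
      (hmeas s hs).stronglyMeasurable (hint s hs)).eventuallyEq
  obtain ⟨u, -, hu, hlim⟩ := exists_seq_strictAnti_tendsto' hlt
  have hu0 : ∀ k, 0 ≤ u k := fun k => hs.trans (hu k).1.le
  refine condExp_ae_eq_of_tendsto (fun k => hH.2 (u k)) (fun k => rcReg_le (hu k).1)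
    (hint t (hs.trans hst)) (hint s hs) (hmeas s hs).stronglyMeasurable
    (fun k => hcond (u k) t (hu0 k) (hu k).2.le) ?_
  filter_upwards [hrc] with ω hω
  exact (hω s hs).tendsto.comp
    (tendsto_nhdsWithin_iff.2 ⟨hlim, Eventually.of_forall fun k => (hu k).1.le⟩)

lemma IsMartingale.of_le_eventuallyMeasurableSpace_sup_of_indep [IsFiniteMeasure μ]
    {e : MeasurableSpace Ω} (hM : IsMartingale μ F M) (hF : IsFiltration m0 F) (he : e ≤ m0)
    (hind : Indep e (Finfty F) μ) (hH : ∀ t, H t ≤ m0) (hFH : ∀ t, 0 ≤ t → F t ≤ H t)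
    (hHe : ∀ t, 0 ≤ t → H t ≤ eventuallyMeasurableSpace (F t ⊔ e) (ae μ)) :
    IsMartingale μ H M := by
  obtain ⟨hint, hadapted, hcond⟩ := hM
  have hmeas : ∀ t, 0 ≤ t → Measurable[H t] (M t) := fun t ht =>
    (hadapted t ht).mono (hFH t ht) le_rfl
  refine ⟨hint, hmeas, fun s t hs hst => ?_⟩
  have ht := hs.trans hst
  exact condExp_ae_eq_of_le_eventuallyMeasurableSpace (hH s) (sup_le (hF.2 s) he) (hHe s hs)
    (hint t ht) (hmeas s hs).stronglyMeasurable
    ((condExp_sup_of_indep (le_Finfty hs) (Finfty_le hF) he hind.symm (hint t ht)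
      ((hadapted t ht).mono (le_Finfty ht) le_rfl).stronglyMeasurable).trans (hcond s t hs hst))

end Filtrations

section Enlargement

/-- The filtration generated by the indicator process `1_{τ ≤ t}` of a random time, denoted `𝔸` in
the theorem. -/
abbrev jumpFiltration (τ : Ω → ℝ) (t : ℝ) : MeasurableSpace Ω :=
  MeasurableSpace.generateFrom {B | ∃ s, 0 ≤ s ∧ s ≤ t ∧ B = {ω | τ ω ≤ s}}

/-- The progressive enlargement of `F` by the random time `τ`: the smallest filtration containing
`F` and for which `τ` is a stopping time, before right-continuous regularization. -/
abbrev progressiveEnlargement (F : ℝ → MeasurableSpace Ω) (τ : Ω → ℝ) (t : ℝ) :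
    MeasurableSpace Ω :=
  F t ⊔ jumpFiltration τ t

variable {m m0 : MeasurableSpace Ω} {F : ℝ → MeasurableSpace Ω} {τ : Ω → ℝ} {s t : ℝ}

lemma jumpFiltration_mono (τ : Ω → ℝ) : Monotone (jumpFiltration τ) := by
  refine fun s t hst => MeasurableSpace.generateFrom_mono ?_
  rintro _ ⟨r, hr, hrs, rfl⟩
  exact ⟨r, hr, hrs.trans hst, rfl⟩

lemma IsFiltration.progressiveEnlargement (hF : IsFiltration m0 F)
    (hτ : ∀ t, jumpFiltration τ t ≤ m0) : IsFiltration m0 (progressiveEnlargement F τ) :=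
  ⟨fun s t hs hst => sup_le_sup (hF.1 s t hs hst) (jumpFiltration_mono τ hst),
    fun t => sup_le (hF.2 t) (hτ t)⟩

lemma measurableSet_le_jumpFiltration (hτ : ∀ ω, 0 ≤ τ ω) (hst : s ≤ t) :
    MeasurableSet[jumpFiltration τ t] {ω | τ ω ≤ s} := by
  rcases le_or_gt 0 s with hs | hs
  · exact MeasurableSpace.measurableSet_generateFrom ⟨s, hs, hst, rfl⟩
  · rw [show {ω | τ ω ≤ s} = ∅ from eq_empty_of_forall_notMem fun ω h =>
      (hs.trans_le (hτ ω)).not_ge h]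
    exact (jumpFiltration τ t).measurableSet_empty

lemma measurable_min_const_of_measurableSet_le (hτ : ∀ s ≤ t, MeasurableSet[m] {ω | τ ω ≤ s}) :
    Measurable[m] fun ω => min (τ ω) t := by
  refine measurable_of_Iic fun s => ?_
  simp only [preimage, mem_Iic, min_le_iff]
  rcases le_or_gt t s with h | h
  · simp [h]
  · simpa [not_le.2 h] using hτ s h.le

lemma exists_inter_eq_of_measurableSet_sup_generateFrom {S : Set (Set Ω)} {T B : Set Ω}
    (hS : ∀ D ∈ S, Disjoint T D)
    (hB : MeasurableSet[m ⊔ MeasurableSpace.generateFrom S] B) :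
    ∃ C, MeasurableSet[m] C ∧ T ∩ B = T ∩ C := by
  have hbot : (MeasurableSpace.generateFrom S).comap ((↑) : T → Ω) = ⊥ := by
    rw [MeasurableSpace.comap_generateFrom, eq_bot_iff]
    refine MeasurableSpace.generateFrom_le ?_
    rintro _ ⟨D, hD, rfl⟩
    rw [Subtype.preimage_coe_eq_empty.2 (disjoint_iff_inter_eq_empty.1 (hS D hD))]
    exact (⊥ : MeasurableSpace T).measurableSet_empty
  have htrace : (m ⊔ MeasurableSpace.generateFrom S).comap ((↑) : T → Ω) = m.comap (↑) := by
    rw [MeasurableSpace.comap_sup, hbot, sup_bot_eq]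
  obtain ⟨C, hC, hCB⟩ : MeasurableSet[m.comap ((↑) : T → Ω)] ((↑) ⁻¹' B) :=
    htrace ▸ ⟨B, hB, rfl⟩
  exact ⟨C, hC, (Subtype.preimage_val_eq_preimage_val_iff _ _ _).1 hCB.symm⟩

lemma exists_inter_eq_of_measurableSet_progressiveEnlargement {B : Set Ω}
    (hB : MeasurableSet[progressiveEnlargement F τ s] B) :
    ∃ C, MeasurableSet[F s] C ∧ {ω | s < τ ω} ∩ B = {ω | s < τ ω} ∩ C := by
  refine exists_inter_eq_of_measurableSet_sup_generateFrom ?_ hB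
  rintro _ ⟨r, -, hrs, rfl⟩
  exact disjoint_left.2 fun ω hω hr => hω.not_ge (hr.trans hrs)

end Enlargement

section CumulativeIntensity

/-- The cumulative intensity `Λ_t = ∫_0^t λ_s ds`. -/
def cumIntensity (lam : ℝ → Ω → ℝ) (t : ℝ) (ω : Ω) : ℝ :=
  ∫ s in Ioc 0 t, lam s ω

variable {m : MeasurableSpace Ω} {F : ℝ → MeasurableSpace Ω} {lam : ℝ → Ω → ℝ} {τ : Ω → ℝ} {t : ℝ}

lemma ProgMeas.measurable_cumIntensity_comp (hlam : ProgMeas F lam) (ht : 0 ≤ t) (hm : F t ≤ m)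
    {σ : Ω → ℝ} (hσ : Measurable[m] σ) (hσt : ∀ ω, σ ω ≤ t) :
    Measurable[m] fun ω => cumIntensity lam (σ ω) ω := by
  let h : ℝ × Ω → ℝ := fun p =>
    if 0 < p.1 ∧ p.1 ≤ σ p.2 then lam (projIcc 0 t ht p.1) p.2 else 0
  have hh : Measurable h := by
    have hlam' : Measurable fun p : Icc (0 : ℝ) t × Ω => lam p.1 p.2 :=
      (hlam t ht).mono (sup_le_sup le_rfl (MeasurableSpace.comap_mono hm)) le_rfl
    refine Measurable.ite ?_ ?_ measurable_const
    · exact (measurableSet_lt measurable_const measurable_fst).inter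
        (measurableSet_le measurable_fst (hσ.comp measurable_snd))
    · exact hlam'.comp
        (((continuous_projIcc (h := ht)).measurable.comp measurable_fst).prodMk measurable_snd)
  convert (hh.stronglyMeasurable.integral_prod_left' (μ := (volume : Measure ℝ))).measurable
    using 2 with ω
  rw [cumIntensity, ← integral_indicator measurableSet_Ioc]
  refine integral_congr_ae (ae_of_all _ fun s => ?_)
  by_cases hs : s ∈ Ioc 0 (σ ω)
  · simp [h, hs.1, hs.2, projIcc_of_mem ht ⟨hs.1.le, hs.2.trans (hσt ω)⟩]
  · simp only [indicator_of_notMem hs, h]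
    exact (if_neg hs).symm

lemma ProgMeas.measurable_cumIntensity (hlam : ProgMeas F lam) (ht : 0 ≤ t) :
    Measurable[F t] (cumIntensity lam t) :=
  hlam.measurable_cumIntensity_comp ht le_rfl measurable_const fun _ => le_rfl

lemma ProgMeas.measurable_compensatedJump (hlam : ProgMeas F lam) (hτ : ∀ ω, 0 ≤ τ ω)
    (ht : 0 ≤ t) : Measurable[progressiveEnlargement F τ t]
      fun ω => compensatedJump (cumIntensity lam · ω) (τ ω) t := by
  have hτs : ∀ s ≤ t, MeasurableSet[progressiveEnlargement F τ t] {ω | τ ω ≤ s} := fun s hst =>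
    (le_sup_right : jumpFiltration τ t ≤ progressiveEnlargement F τ t) _
      (measurableSet_le_jumpFiltration hτ hst)
  exact (Measurable.ite (hτs t le_rfl) measurable_const measurable_const).sub
    (hlam.measurable_cumIntensity_comp ht le_sup_left
      (measurable_min_const_of_measurableSet_le hτs) fun _ => min_le_right _ _)

end CumulativeIntensity

section FirstPassage

lemma sInf_firstPassage_le_iff {L : ℝ → ℝ} (hmono : Monotone L) (hcont : Continuous L) {e : ℝ}
    (h0 : L 0 < e) (hex : ∃ t, e ≤ L t) (t : ℝ) :
    sInf {u | 0 < u ∧ e ≤ L u} ≤ t ↔ e ≤ L t := by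
  have hpos : ∀ u, e ≤ L u → 0 < u := fun u hu => hmono.reflect_lt (h0.trans_le hu)
  have hset : {u | 0 < u ∧ e ≤ L u} = L ⁻¹' Ici e :=
    Set.ext fun u => and_iff_right_of_imp (hpos u)
  have hbdd : BddBelow (L ⁻¹' Ici e) := ⟨0, fun u hu => (hpos u hu).le⟩
  rw [hset]
  exact ⟨fun h => ((isClosed_Ici.preimage hcont).csInf_mem hex hbdd).trans (hmono h),
    fun h => csInf_le hbdd h⟩

variable {m m0 : MeasurableSpace Ω} {μ : Measure Ω} {F : ℝ → MeasurableSpace Ω}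
  {Λ : ℝ → Ω → ℝ} {E τ : Ω → ℝ} {s t : ℝ}

/-- `τ` is almost surely the time at which the nonnegative, nondecreasing, continuous process `Λ`
first reaches the random level `E`. The field `le_iff` encodes both `τ = inf {t : E ≤ Λ_t}` and the
fact that the infimum is over a nonempty set. -/
structure IsFirstPassageTime {m0 : MeasurableSpace Ω} (μ : Measure Ω) (Λ : ℝ → Ω → ℝ)
    (E τ : Ω → ℝ) : Prop where
  nonneg : ∀ᵐ ω ∂μ, ∀ t, 0 ≤ Λ t ω
  monotone : ∀ᵐ ω ∂μ, Monotone (Λ · ω)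
  continuous : ∀ᵐ ω ∂μ, Continuous (Λ · ω)
  le_iff : ∀ᵐ ω ∂μ, ∀ t, τ ω ≤ t ↔ E ω ≤ Λ t ω

namespace IsFirstPassageTime

lemma apply_eq (h : IsFirstPassageTime μ Λ E τ) : ∀ᵐ ω ∂μ, Λ (τ ω) ω = E ω := by
  filter_upwards [h.continuous, h.le_iff] with ω hcont hiff
  have hlt : ∀ᶠ t in 𝓝[<] τ ω, Λ t ω ≤ E ω := by
    filter_upwards [self_mem_nhdsWithin] with t ht
    exact (not_le.1 (mt (hiff t).2 (not_le.2 ht))).le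
  exact le_antisymm (le_of_tendsto hcont.continuousWithinAt hlt) ((hiff _).1 le_rfl)

lemma compensatedJump_eq (h : IsFirstPassageTime μ Λ E τ) :
    ∀ᵐ ω ∂μ, ∀ t, compensatedJump (Λ · ω) (τ ω) t = compensatedJump id (E ω) (Λ t ω) := by
  filter_upwards [h.monotone, h.le_iff, h.apply_eq] with ω hmono hiff hτ t
  simp only [compensatedJump, hiff t, id, hmono.map_min, hτ]

lemma integrable_compensatedJump [IsProbabilityMeasure μ] (h : IsFirstPassageTime μ Λ E τ)
    (hE : IsExpOne μ E) (hΛ : Measurable (Λ t)) :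
    Integrable (fun ω => compensatedJump (Λ · ω) (τ ω) t) μ :=
  (hE.integrable_compensatedJump hΛ (h.nonneg.mono fun _ hω => hω t)).congr
    (h.compensatedJump_eq.mono fun _ hω => (hω t).symm)

lemma setIntegral_compensatedJump [IsProbabilityMeasure μ] (h : IsFirstPassageTime μ Λ E τ)
    (hE : IsExpOne μ E) (hm : m ≤ m0) (hind : Indep (MeasurableSpace.comap E inferInstance) m μ)
    (hΛ : Measurable[m] (Λ t)) {C : Set Ω} (hC : MeasurableSet[m] C) :
    ∫ ω in C, compensatedJump (Λ · ω) (τ ω) t ∂μ = 0 := by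
  have hΛ0 : 0 ≤ᵐ[μ] Λ t := h.nonneg.mono fun _ hω => hω t
  calc ∫ ω in C, compensatedJump (Λ · ω) (τ ω) t ∂μ
      = ∫ ω in C, compensatedJump id (E ω) (Λ t ω) ∂μ :=
        integral_congr_ae (ae_restrict_of_ae (h.compensatedJump_eq.mono fun _ hω => hω t))
    _ = ∫ ω in C, (μ[fun ω => compensatedJump id (E ω) (Λ t ω) | m]) ω ∂μ :=
        (setIntegral_condExp hm
          (hE.integrable_compensatedJump (hΛ.mono hm le_rfl) hΛ0) hC).symm
    _ = ∫ _ in C, 0 ∂μ :=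
        integral_congr_ae (ae_restrict_of_ae (hE.condExp_compensatedJump hm hind hΛ hΛ0))
    _ = 0 := integral_zero _ _

lemma jumpFiltration_le_eventuallyMeasurableSpace (h : IsFirstPassageTime μ Λ E τ)
    (hE : Measurable[m] E) (hΛ : ∀ s, 0 ≤ s → s ≤ t → Measurable[m] (Λ s)) :
    jumpFiltration τ t ≤ eventuallyMeasurableSpace m (ae μ) := by
  refine MeasurableSpace.generateFrom_le ?_
  rintro _ ⟨s, hs, hst, rfl⟩
  refine ⟨{ω | E ω ≤ Λ s ω}, measurableSet_le hE (hΛ s hs hst), ?_⟩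
  filter_upwards [h.le_iff] with ω hω
  exact propext (hω s)

lemma jumpFiltration_le [μ.IsComplete] (h : IsFirstPassageTime μ Λ E τ) (hE : Measurable E)
    (hΛ : ∀ s, 0 ≤ s → Measurable (Λ s)) (t : ℝ) : jumpFiltration τ t ≤ m0 := fun B hB =>
  NullMeasurableSet.measurable_of_complete
    (h.jumpFiltration_le_eventuallyMeasurableSpace hE (fun s hs _ => hΛ s hs) B hB)

lemma progressiveEnlargement_le_eventuallyMeasurableSpace (h : IsFirstPassageTime μ Λ E τ)
    (hF : IsFiltration m0 F) (hΛ : ∀ t, 0 ≤ t → Measurable[F t] (Λ t)) (t : ℝ) :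
    progressiveEnlargement F τ t ≤
      eventuallyMeasurableSpace (F t ⊔ MeasurableSpace.comap E inferInstance) (ae μ) :=
  sup_le (le_sup_left.trans le_eventuallyMeasurableSpace)
    (h.jumpFiltration_le_eventuallyMeasurableSpace ((comap_measurable E).mono le_sup_right le_rfl)
      fun s hs hst => (hΛ s hs).mono ((hF.1 s t hs hst).trans le_sup_left) le_rfl)

-- Up to time `s` the enlargement only adds events which are trivial on `{s < τ}`, and the increment
-- of the process over `[s, t]` vanishes on `{τ ≤ s}`; so `B` may be traded for an event of `F s`.
theorem isMartingale_compensatedJump [IsProbabilityMeasure μ] (h : IsFirstPassageTime μ Λ E τ)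
    (hE : IsExpOne μ E) (hF : IsFiltration m0 F)
    (hind : Indep (MeasurableSpace.comap E inferInstance) (Finfty F) μ)
    (hΛ : ∀ t, 0 ≤ t → Measurable[F t] (Λ t)) (hH : ∀ t, progressiveEnlargement F τ t ≤ m0)
    (hN : ∀ t, 0 ≤ t → Measurable[progressiveEnlargement F τ t]
      fun ω => compensatedJump (Λ · ω) (τ ω) t) :
    IsMartingale μ (progressiveEnlargement F τ)
      fun t ω => compensatedJump (Λ · ω) (τ ω) t := by
  set N : ℝ → Ω → ℝ := fun t ω => compensatedJump (Λ · ω) (τ ω) t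
  have hint : ∀ t, 0 ≤ t → Integrable (N t) μ := fun t ht =>
    h.integrable_compensatedJump hE ((hΛ t ht).mono (hF.2 t) le_rfl)
  refine ⟨hint, hN, fun s t hs hst => ?_⟩
  have ht : 0 ≤ t := hs.trans hst
  refine (ae_eq_condExp_of_forall_setIntegral_eq (hH s) (hint t ht)
    (fun _ _ _ => (hint s hs).integrableOn) (fun B hB _ => ?_)
    (hN s hs).stronglyMeasurable.aestronglyMeasurable).symm
  obtain ⟨C, hC, hBC⟩ := exists_inter_eq_of_measurableSet_progressiveEnlargement hB
  have hincr : ∫ ω in B, N t ω - N s ω ∂μ = ∫ ω in C, N t ω - N s ω ∂μ :=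
    setIntegral_eq_of_inter_eq (hH s B hB) (hF.2 s C hC) hBC fun ω hω => by
      have hτs : τ ω ≤ s := not_lt.1 hω
      simp only [N, compensatedJump_of_le hτs, compensatedJump_of_le (hτs.trans hst), sub_self]
  have hzero : ∀ u, 0 ≤ u → ∫ ω in C, N u ω ∂μ = 0 := fun u hu =>
    h.setIntegral_compensatedJump hE (Finfty_le hF) hind ((hΛ u hu).mono (le_Finfty hu) le_rfl)
      (le_Finfty hs C hC)
  rw [integral_sub (hint t ht).integrableOn (hint s hs).integrableOn,
    integral_sub (hint t ht).integrableOn (hint s hs).integrableOn, hzero t ht, hzero s hs,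
    sub_zero] at hincr
  exact (sub_eq_zero.1 hincr).symm

end IsFirstPassageTime

lemma isFirstPassageTime_cumIntensity {lam : ℝ → Ω → ℝ} (hnonneg : ∀ s ω, 0 ≤ lam s ω)
    (hfin : ∀ᵐ ω ∂μ, ∀ t, IntegrableOn (fun s => lam s ω) (Ioc 0 t))
    (hinf : ∀ᵐ ω ∂μ, Tendsto (cumIntensity lam · ω) atTop atTop) (hE : ∀ᵐ ω ∂μ, 0 < E ω)
    (hτ : ∀ ω, τ ω = sInf {t | 0 < t ∧ E ω ≤ cumIntensity lam t ω}) :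
    IsFirstPassageTime μ (cumIntensity lam) E τ where
  nonneg := ae_of_all _ fun ω _ => integral_nonneg (hnonneg · ω)
  monotone := hfin.mono fun ω hω => monotone_setIntegral_Ioc (hnonneg · ω) hω
  continuous := hfin.mono fun _ hω => continuous_setIntegral_Ioc hω
  le_iff := by
    filter_upwards [hfin, hinf, hE] with ω hfinω hinfω hEω t
    rw [hτ ω]
    exact sInf_firstPassage_le_iff (monotone_setIntegral_Ioc (hnonneg · ω) hfinω)
      (continuous_setIntegral_Ioc hfinω) (by simpa using hEω) (hinfω.eventually_ge_atTop _).exists t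

end FirstPassage

theorem cox_one_jump_general {m0 : MeasurableSpace Ω} (μ : Measure Ω) [IsProbabilityMeasure μ]
    [μ.IsComplete] (F : ℝ → MeasurableSpace Ω) (hF : IsFiltration m0 F)
    (lam : ℝ → Ω → ℝ) (hprog : ProgMeas F lam)
    (hnonneg : ∀ s ω, 0 ≤ lam s ω)
    (hfin : ∀ᵐ ω ∂μ, ∀ t : ℝ, IntegrableOn (fun s => lam s ω) (Set.Ioc 0 t) volume)
    (hinf : ∀ᵐ ω ∂μ, Tendsto (fun t => ∫ s in Set.Ioc 0 t, lam s ω) atTop atTop)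
    (E : Ω → ℝ) (hE : IsExpOne μ E)
    (hEindep : Indep (MeasurableSpace.comap E inferInstance) (Finfty F) μ)
    (τ : Ω → ℝ)
    (hτ : ∀ ω, τ ω = sInf {t : ℝ | 0 < t ∧ E ω ≤ ∫ s in Set.Ioc 0 t, lam s ω})
    (A : ℝ → MeasurableSpace Ω)
    (hA : ∀ t : ℝ, A t =
      MeasurableSpace.generateFrom {B | ∃ s : ℝ, 0 ≤ s ∧ s ≤ t ∧ B = {ω | τ ω ≤ s}})
    (G : ℝ → MeasurableSpace Ω)
    (hG : ∀ t : ℝ, G t = rcReg (fun u => F u ⊔ A u) t) :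
    IsMartingale μ G (fun t ω =>
      (if τ ω ≤ t then (1:ℝ) else 0) - ∫ s in Set.Ioc 0 (min (τ ω) t), lam s ω) ∧
    Immersed μ F G := by
  obtain rfl : A = jumpFiltration τ := funext hA
  obtain rfl : G = rcReg (progressiveEnlargement F τ) := funext hG
  have hpass : IsFirstPassageTime μ (cumIntensity lam) E τ :=
    isFirstPassageTime_cumIntensity hnonneg hfin hinf hE.ae_pos hτ
  have hτ0 : ∀ ω, 0 ≤ τ ω := fun ω => hτ ω ▸ Real.sInf_nonneg fun t ht => ht.1.le
  have hΛ : ∀ t, 0 ≤ t → Measurable[F t] (cumIntensity lam t) := fun t ht =>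
    hprog.measurable_cumIntensity ht
  have hH : IsFiltration m0 (progressiveEnlargement F τ) :=
    hF.progressiveEnlargement
      (hpass.jumpFiltration_le hE.1 fun t ht => (hΛ t ht).mono (hF.2 t) le_rfl)
  have hjump : IsMartingale μ (progressiveEnlargement F τ)
      fun t ω => compensatedJump (cumIntensity lam · ω) (τ ω) t :=
    hpass.isMartingale_compensatedJump hE hF hEindep hΛ hH.2 fun t ht =>
      hprog.measurable_compensatedJump hτ0 ht
  have himm : ∀ M, IsMartingale μ F M → IsMartingale μ (progressiveEnlargement F τ) M :=
    fun M hM => hM.of_le_eventuallyMeasurableSpace_sup_of_indep hF hE.1.comap_le hEindep hH.2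
      (fun _ _ => le_sup_left)
      fun t _ => hpass.progressiveEnlargement_le_eventuallyMeasurableSpace hF hΛ t
  exact ⟨hjump.rcReg_of_rightContinuous hH
      (hpass.continuous.mono fun _ hω _ _ => continuousWithinAt_compensatedJump hω),
    fun t ht => le_sup_left.trans (le_rcReg hH ht),
    fun M hMrc hM => (himm M hM).rcReg_of_rightContinuous hH (ae_of_all _ hMrc)⟩

/-- The Cox construction with one jump time and unit jump size:
`(1_{τ ≤ t} − Λ_{τ ∧ t})_t` is a `G`-martingale and `F` is immersed in `G`. -/
theorem cox_one_jump {m0 : MeasurableSpace Ω} (μ : Measure Ω) [IsProbabilityMeasure μ]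
    (F : ℝ → MeasurableSpace Ω) (hUC : UsualConditions μ F)
    (lam : ℝ → Ω → ℝ) (hprog : ProgMeas F lam)
    (hnonneg : ∀ s ω, 0 ≤ lam s ω)
    (hfin : ∀ᵐ ω ∂μ, ∀ t : ℝ, IntegrableOn (fun s => lam s ω) (Set.Ioc 0 t) volume)
    (hinf : ∀ᵐ ω ∂μ, Tendsto (fun t => ∫ s in Set.Ioc 0 t, lam s ω) atTop atTop)
    (E : Ω → ℝ) (hE : IsExpOne μ E)
    (hEindep : Indep (MeasurableSpace.comap E inferInstance) (Finfty F) μ)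
    (τ : Ω → ℝ)
    (hτ : ∀ ω, τ ω = sInf {t : ℝ | 0 < t ∧ E ω ≤ ∫ s in Set.Ioc 0 t, lam s ω})
    (A : ℝ → MeasurableSpace Ω)
    (hA : ∀ t : ℝ, A t =
      MeasurableSpace.generateFrom {B | ∃ s : ℝ, 0 ≤ s ∧ s ≤ t ∧ B = {ω | τ ω ≤ s}})
    (G : ℝ → MeasurableSpace Ω)
    (hG : ∀ t : ℝ, G t = rcReg (fun u => F u ⊔ A u) t) :
    IsMartingale μ G (fun t ω =>
      (if τ ω ≤ t then (1:ℝ) else 0) - ∫ s in Set.Ioc 0 (min (τ ω) t), lam s ω) ∧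
    Immersed μ F G := by
  have : μ.IsComplete := ⟨fun s hs => hUC.1.2 0 s (hUC.2.2 s hs)⟩
  exact cox_one_jump_general μ F hUC.1 lam hprog hnonneg hfin hinf E hE hEindep τ hτ A hA G hG

end InvMarkovJump
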